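/- arXiv:2402.01497 — 2 statements merged into one kernel-verified Lean document; each statement's English description precedes it below -/
import Mathlib

section
/- Let ℓ ∈ {1,2} and let u = (u₁,u₂,u₃,u₄) ∈ ℂ⁴ with Re(uᵢ) > 1/2 for each i. Then the absolutely convergent series D_ℓ(u) := Σ over quadruples (n₁,n₂,n₃,n₄) of odd positive integers with n₁n₂n₃n₄ a perfect square of n₁^{−u₁} n₂^{−u₂} n₃^{−u₃} n₄^{−u₄} ∏_{p | n₁n₂n₃n₄} g_ℓ(p) satisfies D_ℓ(u) = ( ∏_{1 ≤ i ≤ j ≤ 4} ζ₂(uᵢ + uⱼ) ) · H_ℓ(u). -/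
open scoped Classical

noncomputable section

/-- The Riemann zeta function with its Euler factor at 2 removed. -/
def zeta2 (s : ℂ) : ℂ := riemannZeta s * (1 - (2 : ℂ) ^ (-s))

/-- The combinatorial factor `C_p(u)`. -/
def Cp (p : ℕ) (u : Fin 4 → ℂ) : ℂ :=
  (∏ i : Fin 4, ∏ j : Fin 4, if i < j then 1 - (p : ℂ) ^ (-(u i + u j)) else 1) *
    ∑ A : Finset (Fin 4), if Even A.card then ∏ i ∈ A, (p : ℂ) ^ (-(u i)) else 0

/-- The Euler factor at `p` of the product defining `H_ℓ`. -/
def Hfactor (g : ℕ → ℂ) (u : Fin 4 → ℂ) (p : ℕ) : ℂ :=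
  (1 - g p) * (∏ i : Fin 4, ∏ j : Fin 4, if i ≤ j then 1 - (p : ℂ) ^ (-(u i + u j)) else 1) +
    g p * Cp p u

/-- The Euler product over odd primes. -/
def HEuler (g : ℕ → ℂ) (u : Fin 4 → ℂ) : ℂ :=
  ∏' p : {p : ℕ // p.Prime ∧ p ≠ 2}, Hfactor g u p.1

/-- `g_ℓ(p)`: equal to `1 - 1/p` for `ℓ = 1` and `1 - 1/(p+1)` for `ℓ = 2`. -/
def gl (ℓ : ℕ) (p : ℕ) : ℂ := if ℓ = 1 then 1 - 1 / (p : ℂ) else 1 - 1 / ((p : ℂ) + 1)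

/-- The summand of the Dirichlet series `D_ℓ(u)`: over quadruples of odd positive integers
whose product is a perfect square, `n₁^{-u₁}n₂^{-u₂}n₃^{-u₃}n₄^{-u₄} ∏_{p | n₁n₂n₃n₄} g_ℓ(p)`. -/
def Dterm (ℓ : ℕ) (u : Fin 4 → ℂ) (n : Fin 4 → ℕ) : ℂ :=
  if (∀ i, Odd (n i)) ∧ IsSquare (n 0 * n 1 * n 2 * n 3) then
    (∏ i, ((n i : ℕ) : ℂ) ^ (-u i)) *
      ∏ p ∈ (n 0 * n 1 * n 2 * n 3).primeFactors, gl ℓ p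
  else 0

/-- product of a summable family -/
theorem aux_summable_pi (k : ℕ) (f : Fin k → ℕ → ℝ) (h0 : ∀ i n, 0 ≤ f i n)
    (hs : ∀ i, Summable (f i)) : Summable (fun d : Fin k → ℕ => ∏ i, f i (d i)) := by
  induction k with
  | zero => exact Summable.of_finite
  | succ k ih =>
    have h := (hs 0).mul_of_nonneg (ih (fun i => f i.succ) (fun i n => h0 _ _) (fun i => hs _))
      (fun n => h0 0 n) (fun d => Finset.prod_nonneg fun i _ => h0 _ _)
    rw [← (Fin.consEquiv (fun _ : Fin (k+1) => ℕ)).summable_iff]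
    refine h.congr fun x => ?_
    simp [Fin.consEquiv, Fin.prod_univ_succ]

theorem aux_summable_pi' {ι : Type} [Fintype ι] (f : ι → ℕ → ℝ) (h0 : ∀ i n, 0 ≤ f i n)
    (hs : ∀ i, Summable (f i)) : Summable (fun d : ι → ℕ => ∏ i, f i (d i)) := by
  have e := Fintype.equivFin ι
  have h := aux_summable_pi (Fintype.card ι) (fun i => f (e.symm i)) (fun i => h0 _) (fun i => hs _)
  rw [← (e.arrowCongr (Equiv.refl ℕ)).summable_iff] at h
  refine h.congr fun d => ?_
  simp only [Function.comp, Equiv.arrowCongr_apply, Equiv.coe_refl, id]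
  exact (e.symm.prod_comp (fun i => f i (d i)))

/-- the parametrisation map -/
def auxPhi (d : Fin 4 × Fin 4 → ℕ) (i : Fin 4) : ℕ := (∏ j, d (i, j)) * ∏ j, d (j, i)

theorem auxPhi_mul (d e : Fin 4 × Fin 4 → ℕ) : auxPhi (d * e) = auxPhi d * auxPhi e := by
  ext i
  simp only [auxPhi, Pi.mul_apply, Finset.prod_mul_distrib]
  ring

theorem auxPhi_single (i j : Fin 4) (p : ℕ) :
    auxPhi (Pi.mulSingle (i, j) p) = Pi.mulSingle i p * Pi.mulSingle j p := by
  ext k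
  have h1 : ∀ (a b : Fin 4), (Pi.mulSingle (i, j) p : Fin 4 × Fin 4 → ℕ) (a, b)
      = if a = i then (if b = j then p else 1) else 1 := by
    intro a b
    simp only [Pi.mulSingle_apply, Prod.mk.injEq]
    split_ifs <;> simp_all
  simp only [auxPhi, h1, Pi.mul_apply, Pi.mulSingle_apply]
  congr 1
  · split_ifs <;> simp
  · rw [Finset.prod_ite_eq']
    simp

theorem auxPhi_surj : ∀ (N : ℕ) (n : Fin 4 → ℕ), ∏ i, n i = N → N ≠ 0 → IsSquare N →
    ∃ d, auxPhi d = n := by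
  intro N
  induction N using Nat.strong_induction_on with
  | _ N ih =>
  intro n hn hN hsq
  by_cases h1 : N = 1
  · refine ⟨1, ?_⟩
    ext i
    have : n i ∣ 1 := by rw [← h1, ← hn]; exact Finset.dvd_prod_of_mem _ (Finset.mem_univ i)
    simp [auxPhi, Nat.dvd_one.mp this]
  obtain ⟨p, hp, hpN⟩ := Nat.exists_prime_and_dvd h1
  have hp2 : p * p ∣ N := by
    obtain ⟨r, rfl⟩ := hsq
    have : p ∣ r := (hp.dvd_mul.mp hpN).elim id id
    exact mul_dvd_mul this this
  have key : ∃ (i j : Fin 4) (n' : Fin 4 → ℕ), n = Pi.mulSingle i p * Pi.mulSingle j p * n' := by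
    have step : ∀ m : Fin 4 → ℕ, p ∣ ∏ i, m i → ∃ (i : Fin 4) (m' : Fin 4 → ℕ), m = Pi.mulSingle i p * m' := by
      intro m hm
      obtain ⟨i, -, c, hc⟩ := (Prime.dvd_finsetProd_iff hp.prime _).mp hm
      refine ⟨i, Function.update m i c, ?_⟩
      ext k
      by_cases hk : k = i
      · subst hk; simp [hc]
      · simp [hk]
    obtain ⟨i, m, hm⟩ := step n (hn ▸ hpN)
    have : p ∣ ∏ i, m i := by
      rw [← hn, hm] at hp2
      simp only [Pi.mul_apply, Finset.prod_mul_distrib] at hp2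
      simp at hp2
      exact Nat.dvd_of_mul_dvd_mul_left hp.pos hp2
    obtain ⟨j, m', hm'⟩ := step m this
    exact ⟨i, j, m', by rw [hm, hm', mul_assoc]⟩
  obtain ⟨i, j, n', rfl⟩ := key
  have hprod : N = p * p * ∏ i, n' i := by
    rw [← hn]
    simp [Finset.prod_mul_distrib]
  have hn0 : ∏ i, n' i ≠ 0 := by
    intro h; rw [h] at hprod; omega
  obtain ⟨d, hd⟩ := ih (∏ i, n' i) (by
      rw [hprod]
      have := hp.two_le
      have h0 := Nat.pos_of_ne_zero hn0
      have h4 : 1 < p * p := by nlinarith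
      exact lt_mul_of_one_lt_left h0 h4) n' rfl hn0 (by
      obtain ⟨r, hr⟩ := hsq
      have : p * p ∣ r * r := hr ▸ hp2
      obtain ⟨t, rfl⟩ := (Nat.pow_dvd_pow_iff (two_ne_zero)).mp (by simpa only [sq] using this : p ^ 2 ∣ r ^ 2)
      refine ⟨t, ?_⟩
      have hpp : 0 < p * p := Nat.mul_pos hp.pos hp.pos
      apply Nat.eq_of_mul_eq_mul_left hpp
      rw [← hprod, hr]; ring)
  exact ⟨Pi.mulSingle (i, j) p * d, by rw [auxPhi_mul, auxPhi_single, hd]⟩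

theorem aux_summable_sq (σ : Fin 4 → ℝ) (hσ : ∀ i, 1 / 2 < σ i) :
    Summable (fun n : Fin 4 → ℕ => if (∏ i, n i ≠ 0 ∧ IsSquare (∏ i, n i)) then
      ∏ i, ((n i : ℝ)) ^ (-σ i) else 0) := by
  have hS := aux_summable_pi' (ι := Fin 4 × Fin 4) (fun ij n => (n : ℝ) ^ (-(σ ij.1 + σ ij.2)))
    (fun _ _ => by positivity)
    (fun ij => Real.summable_nat_rpow.mpr (by have := hσ ij.1; have := hσ ij.2; linarith))
  set S : Set (Fin 4 → ℕ) := {n | ∏ i, n i ≠ 0 ∧ IsSquare (∏ i, n i)} with hSdef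
  have hch : ∀ n : S, ∃ d, auxPhi d = n.1 := fun n => auxPhi_surj _ n.1 rfl n.2.1 n.2.2
  choose s hs using hch
  have hinj : Function.Injective s := by
    intro a b hab
    apply Subtype.ext
    rw [← hs a, ← hs b, hab]
  have h2 := hS.comp_injective hinj
  have h3 : Summable ((fun n : Fin 4 → ℕ => ∏ i, ((n i : ℝ)) ^ (-σ i)) ∘ ((↑) : S → _)) := by
    refine h2.congr fun n => ?_
    simp only [Function.comp]
    rw [← hs n]
    generalize s n = d
    simp only [auxPhi, Nat.cast_mul, Nat.cast_prod]
    have : ∀ i, ((∏ j, (d (i, j) : ℝ)) * ∏ j, (d (j, i) : ℝ)) ^ (-σ i)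
        = (∏ j, (d (i, j) : ℝ) ^ (-σ i)) * ∏ j, (d (j, i) : ℝ) ^ (-σ i) := by
      intro i
      rw [Real.mul_rpow (by positivity) (by positivity),
        Real.finsetProd_rpow _ _ (fun _ _ => by positivity),
        Real.finsetProd_rpow _ _ (fun _ _ => by positivity)]
    simp only [this, Finset.prod_mul_distrib]
    rw [Finset.prod_comm (f := fun i j => (d (j, i) : ℝ) ^ (-σ i)), ← Finset.prod_mul_distrib,
      Fintype.prod_prod_type]
    refine Finset.prod_congr rfl fun i _ => ?_
    rw [← Finset.prod_mul_distrib]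
    refine Finset.prod_congr rfl fun j _ => ?_
    rcases Nat.eq_zero_or_pos (d (i, j)) with h | h
    · have := hσ i; have := hσ j
      rw [h, Nat.cast_zero, Real.zero_rpow (by linarith), Real.zero_rpow (by linarith), zero_mul]
    · rw [← Real.rpow_add (by exact_mod_cast h)]
      congr 1; ring
  rw [summable_subtype_iff_indicator] at h3
  refine h3.congr fun n => ?_
  simp only [Set.indicator, hSdef, Set.mem_ofPred_eq]

/-- the weight depending only on the product -/
def auxH (ℓ : ℕ) (m : ℕ) : ℂ :=
  if Odd m ∧ IsSquare m then ∏ p ∈ m.primeFactors, gl ℓ p else 0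

/-- the arithmetic function `n ↦ n ^ (-u)` -/
def auxA (u : ℂ) : ArithmeticFunction ℂ := ⟨fun n => if n = 0 then 0 else (n : ℂ) ^ (-u), rfl⟩

theorem auxA_apply (u : ℂ) {n : ℕ} (hn : n ≠ 0) : auxA u n = (n : ℂ) ^ (-u) := by
  simp [auxA, hn]

theorem auxA_mult (u : ℂ) : (auxA u).IsMultiplicative := by
  refine ArithmeticFunction.IsMultiplicative.iff_ne_zero.mpr ⟨by simp [auxA], ?_⟩
  intro m n hm hn _
  rw [auxA_apply _ hm, auxA_apply _ hn, auxA_apply _ (mul_ne_zero hm hn), Nat.cast_mul,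
    Complex.natCast_mul_natCast_cpow]

/-- the fourfold convolution -/
def auxConv (u : Fin 4 → ℂ) : ArithmeticFunction ℂ :=
  (auxA (u 0) * auxA (u 1)) * (auxA (u 2) * auxA (u 3))

theorem auxConv_mult (u : Fin 4 → ℂ) : (auxConv u).IsMultiplicative :=
  ((auxA_mult _).mul (auxA_mult _)).mul ((auxA_mult _).mul (auxA_mult _))

theorem auxH_mul (ℓ : ℕ) {m n : ℕ} (h : m.Coprime n) : auxH ℓ (m * n) = auxH ℓ m * auxH ℓ n := by
  have hsq : IsSquare (m * n) ↔ IsSquare m ∧ IsSquare n := by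
    constructor
    · rintro ⟨r, hr⟩
      constructor
      · obtain ⟨d, hd⟩ := exists_eq_pow_of_mul_eq_pow (k := 2) (c := r)
          (show IsUnit (GCDMonoid.gcd m n) from Nat.isUnit_iff.mpr h) (by rw [hr, sq])
        exact ⟨d, by rw [hd, sq]⟩
      · obtain ⟨d, hd⟩ := exists_eq_pow_of_mul_eq_pow (k := 2) (c := r)
          (show IsUnit (GCDMonoid.gcd n m) from Nat.isUnit_iff.mpr h.symm) (by rw [mul_comm, hr, sq])
        exact ⟨d, by rw [hd, sq]⟩
    · rintro ⟨h1, h2⟩; exact h1.mul h2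
  unfold auxH
  simp only [Nat.odd_mul, hsq]
  rw [h.primeFactors_mul, Finset.prod_union h.disjoint_primeFactors]
  by_cases h1 : Odd m ∧ IsSquare m
  · by_cases h2 : Odd n ∧ IsSquare n
    · rw [if_pos h1, if_pos h2, if_pos ⟨⟨h1.1, h2.1⟩, h1.2, h2.2⟩]
    · rw [if_neg h2, mul_zero, if_neg (fun h3 => h2 ⟨h3.1.2, h3.2.2⟩)]
  · rw [if_neg h1, zero_mul, if_neg (fun h3 => h1 ⟨h3.1.1, h3.2.1⟩)]

theorem aux_Dterm (ℓ : ℕ) (u : Fin 4 → ℂ) (n : Fin 4 → ℕ) :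
    Dterm ℓ u n = auxH ℓ (∏ i, n i) * ∏ i, auxA (u i) (n i) := by
  have hp : ∏ i, n i = n 0 * n 1 * n 2 * n 3 := by simp [Fin.prod_univ_four]
  have hodd : (∀ i, Odd (n i)) ↔ Odd (n 0 * n 1 * n 2 * n 3) := by
    simp [Fin.forall_fin_succ, Nat.odd_mul, and_assoc]
  unfold Dterm auxH
  rw [hp]
  by_cases h : Odd (n 0 * n 1 * n 2 * n 3) ∧ IsSquare (n 0 * n 1 * n 2 * n 3)
  · have h' := h
    rw [← hodd] at h'
    rw [if_pos h, if_pos h', mul_comm]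
    congr 1
    refine Finset.prod_congr rfl fun i _ => ?_
    rw [auxA_apply]
    intro h0
    have := h'.1 i
    rw [h0] at this
    exact absurd this (by decide)
  · have h' := h
    rw [← hodd] at h'
    rw [if_neg h, if_neg h', zero_mul]

theorem aux_gl_norm (ℓ : ℕ) {p : ℕ} (hp : p ≠ 0) : ‖gl ℓ p‖ ≤ 1 := by
  have h1 : (1 : ℝ) ≤ p := by exact_mod_cast Nat.one_le_iff_ne_zero.mpr hp
  unfold gl
  split_ifs
  · have : (1 - 1 / (p : ℂ)) = ((1 - 1 / (p : ℝ) : ℝ) : ℂ) := by push_cast; rfl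
    rw [this, Complex.norm_real, Real.norm_eq_abs, abs_le]
    have : 0 < 1 / (p : ℝ) := by positivity
    have : 1 / (p : ℝ) ≤ 1 := by rw [div_le_one (by linarith)]; exact h1
    constructor <;> linarith
  · have : (1 - 1 / ((p : ℂ) + 1)) = ((1 - 1 / ((p : ℝ) + 1) : ℝ) : ℂ) := by push_cast; rfl
    rw [this, Complex.norm_real, Real.norm_eq_abs, abs_le]
    have : 0 < 1 / ((p : ℝ) + 1) := by positivity
    have : 1 / ((p : ℝ) + 1) ≤ 1 := by rw [div_le_one (by linarith)]; linarith
    constructor <;> linarith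

theorem aux_summable_D (ℓ : ℕ) (u : Fin 4 → ℂ) (hu : ∀ i, 1 / 2 < (u i).re) :
    Summable (fun n => ‖Dterm ℓ u n‖) := by
  refine Summable.of_nonneg_of_le (fun _ => norm_nonneg _) (fun n => ?_)
    (aux_summable_sq (fun i => (u i).re) hu)
  rw [aux_Dterm]
  unfold auxH
  by_cases h : Odd (∏ i, n i) ∧ IsSquare (∏ i, n i)
  · have h0 : ∏ i, n i ≠ 0 := by
      intro h0; rw [h0] at h; exact absurd h.1 (by decide)
    rw [if_pos h, if_pos ⟨h0, h.2⟩, norm_mul, norm_prod, norm_prod]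
    have h1 : ∏ p ∈ (∏ i, n i).primeFactors, ‖gl ℓ p‖ ≤ 1 :=
      Finset.prod_le_one (fun _ _ => norm_nonneg _)
        (fun p hp => aux_gl_norm ℓ (Nat.prime_of_mem_primeFactors hp).ne_zero)
    have h2 : ∏ i, ‖auxA (u i) (n i)‖ = ∏ i, ((n i : ℝ)) ^ (-(u i).re) := by
      refine Finset.prod_congr rfl fun i _ => ?_
      have hi : n i ≠ 0 := fun hi => h0 (Finset.prod_eq_zero (Finset.mem_univ i) hi)
      rw [auxA_apply _ hi, Complex.norm_natCast_cpow_of_pos (Nat.pos_of_ne_zero hi), Complex.neg_re]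
    rw [h2]
    exact mul_le_of_le_one_left (Finset.prod_nonneg fun _ _ => by positivity) h1
  · rw [if_neg h, zero_mul, norm_zero]
    split_ifs
    · exact Finset.prod_nonneg fun _ _ => by positivity
    · exact le_rfl

theorem aux_fiber (u : Fin 4 → ℂ) {m : ℕ} (hm : m ≠ 0) :
    ∑' n : (fun n : Fin 4 → ℕ => ∏ i, n i) ⁻¹' {m}, ∏ i, auxA (u i) (n.1 i) = auxConv u m := by
  set T : Finset (Fin 4 → ℕ) :=
    (Fintype.piFinset fun _ => m.divisors).filter (fun n => ∏ i, n i = m) with hT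
  have hTm : ∀ n, n ∈ T ↔ ∏ i, n i = m := by
    intro n
    simp only [hT, Finset.mem_filter, Fintype.mem_piFinset, Nat.mem_divisors, and_iff_right_iff_imp]
    intro h i
    exact ⟨h ▸ Finset.dvd_prod_of_mem _ (Finset.mem_univ i), hm⟩
  have hset : (fun n : Fin 4 → ℕ => ∏ i, n i) ⁻¹' {m} = (T : Set (Fin 4 → ℕ)) := by
    ext n; simp [hTm]
  rw [hset, Finset.tsum_subtype' T (fun n => ∏ i, auxA (u i) (n i))]
  unfold auxConv
  simp only [ArithmeticFunction.mul_apply, Finset.sum_mul_sum, ← Finset.sum_product']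
  rw [Finset.sum_sigma']
  refine Finset.sum_nbij'
    (fun n => ⟨(n 0 * n 1, n 2 * n 3), ((n 0, n 1), (n 2, n 3))⟩)
    (fun x => ![x.2.1.1, x.2.1.2, x.2.2.1, x.2.2.2]) ?_ ?_ ?_ ?_ ?_
  · intro n hn
    rw [hTm, Fin.prod_univ_four] at hn
    have h0 : n 0 * n 1 * (n 2 * n 3) ≠ 0 := by rw [← mul_assoc, hn]; exact hm
    simp only [Finset.mem_sigma, Finset.mem_product, Nat.mem_divisorsAntidiagonal]
    refine ⟨⟨by rw [← hn]; ring, hm⟩, ⟨by trivial, left_ne_zero_of_mul h0⟩, ⟨by trivial, right_ne_zero_of_mul h0⟩⟩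
  · rintro ⟨⟨a, b⟩, ⟨⟨c, d⟩, ⟨e, f⟩⟩⟩ hx
    simp only [Finset.mem_sigma, Finset.mem_product, Nat.mem_divisorsAntidiagonal] at hx
    rw [hTm, Fin.prod_univ_four]
    obtain ⟨⟨h1, -⟩, ⟨h2, -⟩, ⟨h3, -⟩⟩ := hx
    simp
    rw [← h1, ← h2, ← h3]; ring
  · intro n hn
    ext i
    fin_cases i <;> rfl
  · rintro ⟨⟨a, b⟩, ⟨⟨c, d⟩, ⟨e, f⟩⟩⟩ hx
    simp only [Finset.mem_sigma, Finset.mem_product, Nat.mem_divisorsAntidiagonal] at hx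
    obtain ⟨⟨h1, -⟩, ⟨h2, -⟩, ⟨h3, -⟩⟩ := hx
    simp [h2, h3]
  · intro n hn
    simp [Fin.prod_univ_four]
    ring

theorem aux_fiberD (ℓ : ℕ) (u : Fin 4 → ℂ) (m : ℕ) :
    ∑' n : (fun n : Fin 4 → ℕ => ∏ i, n i) ⁻¹' {m}, Dterm ℓ u n.1 = auxH ℓ m * auxConv u m := by
  have h : ∀ n : (fun n : Fin 4 → ℕ => ∏ i, n i) ⁻¹' {m},
      Dterm ℓ u n.1 = auxH ℓ m * ∏ i, auxA (u i) (n.1 i) := by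
    intro n
    rw [aux_Dterm, show ∏ i, n.1 i = m from n.2]
  simp only [h]
  rw [tsum_mul_left]
  rcases eq_or_ne m 0 with rfl | hm
  · simp [auxH]
  · rw [aux_fiber u hm]

theorem aux_euler (ℓ : ℕ) (u : Fin 4 → ℂ) (hu : ∀ i, 1 / 2 < (u i).re) :
    HasProd (fun p : Nat.Primes => ∑' e : ℕ, auxH ℓ (p ^ e) * auxConv u (p ^ e))
      (∑' n, Dterm ℓ u n) := by
  have hs := aux_summable_D ℓ u hu
  have h1 := hs.of_norm.hasSum.tsum_fiberwise (fun n : Fin 4 → ℕ => ∏ i, n i)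
  have h2 := (hs.hasSum.tsum_fiberwise (fun n : Fin 4 → ℕ => ∏ i, n i)).summable
  simp only [aux_fiberD] at h1
  have h3 : Summable (fun m => ‖auxH ℓ m * auxConv u m‖) := by
    refine Summable.of_nonneg_of_le (fun _ => norm_nonneg _) (fun m => ?_) h2
    rw [← aux_fiberD]
    exact norm_tsum_le_tsum_norm (hs.subtype _)
  rw [← h1.tsum_eq]
  refine EulerProduct.eulerProduct_hasProd (f := fun m => auxH ℓ m * auxConv u m) ?_ ?_ h3 ?_
  · simp [auxH, (auxConv_mult u).map_one]
  · intro m n hmn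
    rw [auxH_mul ℓ hmn, (auxConv_mult u).map_mul_of_coprime hmn]
    ring
  · simp

theorem aux_conv (a b : ArithmeticFunction ℂ) {p : ℕ} (hp : p.Prime) (ε : ℂ)
    (ha : Summable fun k => ‖a (p ^ k) * ε ^ k‖) (hb : Summable fun k => ‖b (p ^ k) * ε ^ k‖) :
    (Summable fun k => ‖(a * b) (p ^ k) * ε ^ k‖) ∧
    ∑' k, (a * b) (p ^ k) * ε ^ k = (∑' k, a (p ^ k) * ε ^ k) * ∑' k, b (p ^ k) * ε ^ k := by
  have h : ∀ k, (a * b) (p ^ k) * ε ^ k =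
      ∑ ij ∈ Finset.HasAntidiagonal.antidiagonal k, (a (p ^ ij.1) * ε ^ ij.1) * (b (p ^ ij.2) * ε ^ ij.2) := by
    intro k
    rw [ArithmeticFunction.mul_apply, Nat.sum_divisorsAntidiagonal (fun x y => a x * b y),
      Nat.divisors_prime_pow hp, Finset.sum_map,
      Finset.Nat.sum_antidiagonal_eq_sum_range_succ
        (fun i j => (a (p ^ i) * ε ^ i) * (b (p ^ j) * ε ^ j)), Finset.sum_mul]
    refine Finset.sum_congr rfl fun i hi => ?_
    have hik : i ≤ k := Nat.lt_succ_iff.mp (Finset.mem_range.mp hi)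
    simp only [Function.Embedding.coeFn_mk]
    rw [Nat.pow_div hik hp.pos]
    have he : ε ^ k = ε ^ i * ε ^ (k - i) := by rw [← pow_add, Nat.add_sub_cancel' hik]
    rw [he]
    ring
  simp only [h]
  generalize hf : (fun k => a (p ^ k) * ε ^ k) = f
  generalize hg : (fun k => b (p ^ k) * ε ^ k) = g
  have hf' : ∀ k, a (p ^ k) * ε ^ k = f k := fun k => congrFun hf k
  have hg' : ∀ k, b (p ^ k) * ε ^ k = g k := fun k => congrFun hg k
  simp only [hf'] at ha ⊢
  simp only [hg'] at hb ⊢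
  exact ⟨summable_norm_sum_mul_antidiagonal_of_summable_norm ha hb,
    (tsum_mul_tsum_eq_tsum_sum_antidiagonal_of_summable_norm ha hb).symm⟩

theorem auxA_pow (u : ℂ) {p : ℕ} (hp : p.Prime) (k : ℕ) :
    auxA u (p ^ k) = ((p : ℂ) ^ (-u)) ^ k := by
  rw [auxA_apply _ (pow_ne_zero _ hp.ne_zero), Nat.cast_pow]
  rw [← Complex.natCast_cpow_natCast_mul, mul_comm, Complex.cpow_mul_nat]

theorem aux_norm_lt {u : ℂ} (hu : 0 < u.re) {p : ℕ} (hp : p.Prime) : ‖(p : ℂ) ^ (-u)‖ < 1 := by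
  rw [Complex.norm_natCast_cpow_of_pos hp.pos, Complex.neg_re]
  exact Real.rpow_lt_one_of_one_lt_of_neg (by exact_mod_cast hp.one_lt) (by linarith)

theorem aux_convSum (u : Fin 4 → ℂ) (hu : ∀ i, 1 / 2 < (u i).re) {p : ℕ} (hp : p.Prime) (ε : ℂ)
    (hε : ‖ε‖ = 1) :
    HasSum (fun k => auxConv u (p ^ k) * ε ^ k) (∏ i, (1 - (p : ℂ) ^ (-u i) * ε)⁻¹) := by
  have hlt : ∀ i, ‖(p : ℂ) ^ (-u i) * ε‖ < 1 := fun i => by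
    rw [norm_mul, hε, mul_one]; exact aux_norm_lt (by have := hu i; linarith) hp
  have h1 : ∀ i, Summable fun k => ‖auxA (u i) (p ^ k) * ε ^ k‖ := fun i => by
    simp only [auxA_pow _ hp, ← mul_pow, norm_pow]
    exact summable_geometric_of_lt_one (norm_nonneg _) (hlt i)
  have h2 : ∀ i, ∑' k, auxA (u i) (p ^ k) * ε ^ k = (1 - (p : ℂ) ^ (-u i) * ε)⁻¹ := fun i => by
    simp only [auxA_pow _ hp, ← mul_pow]
    exact tsum_geometric_of_norm_lt_one (hlt i)
  have a := aux_conv _ _ hp ε (h1 0) (h1 1)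
  have b := aux_conv _ _ hp ε (h1 2) (h1 3)
  have c := aux_conv _ _ hp ε a.1 b.1
  have := c.1.of_norm.hasSum
  rw [c.2, a.2, b.2, h2, h2, h2, h2] at this
  rw [Fin.prod_univ_four]
  rw [mul_assoc (_ * _)]
  exact this

theorem auxH_pow (ℓ : ℕ) {p : ℕ} (hp : p.Prime) (hp2 : p ≠ 2) (k : ℕ) :
    auxH ℓ (p ^ k) = (if k = 0 then 1 - gl ℓ p else 0) + gl ℓ p / 2 * (1 ^ k + (-1) ^ k) := by
  have ho : Odd p := hp.odd_of_ne_two hp2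
  unfold auxH
  rcases eq_or_ne k 0 with rfl | hk
  · simp; ring
  rw [if_neg hk, Nat.primeFactors_prime_pow hk hp, Finset.prod_singleton]
  rcases Nat.even_or_odd k with he | hodd
  · rw [if_pos ⟨ho.pow, he.isSquare_pow p⟩, he.neg_one_pow]; ring
  · rw [if_neg, hodd.neg_one_pow]
    · ring
    · rintro ⟨-, r, hr⟩
      have h := congrArg (fun t => t.factorization p) hr
      have hr0 : r ≠ 0 := by
        rintro rfl
        exact pow_ne_zero k hp.ne_zero (by simpa using hr)
      simp only [hp.factorization_pow, Nat.factorization_mul hr0 hr0, Finsupp.add_apply,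
        Finsupp.single_eq_same] at h
      exact (Nat.not_even_iff_odd.mpr hodd) ⟨_, h⟩

theorem aux_cpow_add (u v : ℂ) {p : ℕ} (hp : p.Prime) :
    (p : ℂ) ^ (-(u + v)) = (p : ℂ) ^ (-u) * (p : ℂ) ^ (-v) := by
  rw [neg_add, Complex.cpow_add _ _ (by exact_mod_cast hp.ne_zero)]

theorem aux_alg (g : ℂ) (x : Fin 4 → ℂ) (h1 : ∀ i, 1 - x i ≠ 0) (h2 : ∀ i, 1 + x i ≠ 0) :
    ((1 - g) + g / 2 * ((∏ i, (1 - x i * 1)⁻¹) + ∏ i, (1 - x i * (-1))⁻¹)) *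
      (∏ i : Fin 4, ∏ j : Fin 4, if i ≤ j then 1 - x i * x j else 1) =
    (1 - g) * (∏ i : Fin 4, ∏ j : Fin 4, if i ≤ j then 1 - x i * x j else 1) +
    g * ((∏ i : Fin 4, ∏ j : Fin 4, if i < j then 1 - x i * x j else 1) *
    ∑ A : Finset (Fin 4), if Even A.card then ∏ i ∈ A, x i else 0) := by
  have hE : 2 * (∑ A : Finset (Fin 4), if Even A.card then ∏ i ∈ A, x i else 0) =
      (∏ i, (1 + x i)) + ∏ i, (1 - x i) := by
    rw [Finset.prod_one_add, Finset.powerset_univ]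
    simp only [sub_eq_add_neg]
    rw [Finset.prod_one_add, Finset.powerset_univ, ← Finset.sum_add_distrib, Finset.mul_sum]
    refine Finset.sum_congr rfl fun A _ => ?_
    rw [Finset.prod_neg]
    split_ifs with h
    · rw [h.neg_one_pow]; ring
    · rw [(Nat.not_even_iff_odd.mp h).neg_one_pow]; ring
  have hP : (∏ i : Fin 4, ∏ j : Fin 4, if i ≤ j then 1 - x i * x j else 1) =
      (∏ i, (1 - x i)) * (∏ i, (1 + x i)) *
      (∏ i : Fin 4, ∏ j : Fin 4, if i < j then 1 - x i * x j else 1) := by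
    rw [← Finset.prod_mul_distrib, ← Finset.prod_mul_distrib]
    simp [Fin.prod_univ_four]
    ring
  have e1 : ∏ i, (1 - x i * 1)⁻¹ = (∏ i, (1 - x i))⁻¹ := by simp [Finset.prod_inv_distrib]
  have e2 : ∏ i, (1 - x i * (-1))⁻¹ = (∏ i, (1 + x i))⁻¹ := by simp [Finset.prod_inv_distrib]
  have n1 : ∏ i, (1 - x i) ≠ 0 := Finset.prod_ne_zero_iff.mpr fun i _ => h1 i
  have n2 : ∏ i, (1 + x i) ≠ 0 := Finset.prod_ne_zero_iff.mpr fun i _ => h2 i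
  rw [e1, e2, hP]
  generalize (∑ A : Finset (Fin 4), if Even A.card then ∏ i ∈ A, x i else 0) = E at *
  generalize (∏ i : Fin 4, ∏ j : Fin 4, if i < j then 1 - x i * x j else 1) = Q at *
  generalize ∏ i, (1 - x i) = M at *
  generalize ∏ i, (1 + x i) = N at *
  have : E = (N + M) / 2 := by rw [← hE]; ring
  rw [this]
  field_simp

theorem aux_local (ℓ : ℕ) (u : Fin 4 → ℂ) (hu : ∀ i, 1 / 2 < (u i).re) {p : ℕ} (hp : p.Prime)
    (hp2 : p ≠ 2) :
    (∑' e : ℕ, auxH ℓ (p ^ e) * auxConv u (p ^ e)) *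
      (∏ i : Fin 4, ∏ j : Fin 4, if i ≤ j then 1 - (p : ℂ) ^ (-(u i + u j)) else 1) =
    Hfactor (gl ℓ) u p := by
  have hs1 := aux_convSum u hu hp 1 (by simp)
  have hs2 := aux_convSum u hu hp (-1) (by simp)
  have hs := (hasSum_ite_eq 0 (1 - gl ℓ p)).add ((hs1.add hs2).mul_left (gl ℓ p / 2))
  have : ∑' e : ℕ, auxH ℓ (p ^ e) * auxConv u (p ^ e) = (1 - gl ℓ p) + gl ℓ p / 2 *
      ((∏ i, (1 - (p : ℂ) ^ (-u i) * 1)⁻¹) + ∏ i, (1 - (p : ℂ) ^ (-u i) * (-1))⁻¹) := by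
    rw [← hs.tsum_eq]
    refine tsum_congr fun k => ?_
    rw [auxH_pow ℓ hp hp2]
    rcases eq_or_ne k 0 with rfl | hk
    · simp [(auxConv_mult u).map_one]
    · simp [hk]; ring
  have hn : ∀ i, ‖(p : ℂ) ^ (-u i)‖ < 1 := fun i => aux_norm_lt (by have := hu i; linarith) hp
  rw [this]
  unfold Hfactor Cp
  simp only [aux_cpow_add _ _ hp]
  refine aux_alg (gl ℓ p) (fun i => (p : ℂ) ^ (-u i)) (fun i h => ?_) (fun i h => ?_)
  · have h' : (p : ℂ) ^ (-u i) = 1 := (sub_eq_zero.mp h).symm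
    have := hn i
    rw [h', norm_one] at this
    exact lt_irrefl _ this
  · have h' : (p : ℂ) ^ (-u i) = -1 := by rw [add_comm] at h; exact eq_neg_of_add_eq_zero_left h
    have := hn i
    rw [h', norm_neg, norm_one] at this
    exact lt_irrefl _ this

theorem aux_local_two (ℓ : ℕ) (u : Fin 4 → ℂ) :
    (∑' e : ℕ, auxH ℓ (2 ^ e) * auxConv u (2 ^ e)) = 1 := by
  rw [tsum_eq_single 0]
  · simp [auxH, (auxConv_mult u).map_one]
  · intro k hk
    have : ¬ Odd (2 ^ k) := by
      rw [Nat.not_odd_iff_even]; exact (even_two).pow_of_ne_zero hk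
    simp [auxH, this]

theorem aux_zeta2_ne {s : ℂ} (hs : 1 < s.re) : zeta2 s ≠ 0 := by
  refine mul_ne_zero (riemannZeta_ne_zero_of_one_lt_re hs) fun h => ?_
  have h1 := aux_norm_lt (u := s) (by linarith) Nat.prime_two
  have h' : ((2 : ℕ) : ℂ) ^ (-s) = 1 := (sub_eq_zero.mp h).symm
  rw [h', norm_one] at h1
  exact lt_irrefl _ h1

theorem aux_zeta2 {s : ℂ} (hs : 1 < s.re) :
    HasProd (fun p : Nat.Primes => if (p : ℕ) = 2 then 1 else 1 - (p : ℂ) ^ (-s)) (zeta2 s)⁻¹ := by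
  have hne := aux_zeta2_ne hs
  have h1 := (riemannZeta_eulerProduct_hasProd hs).inv₀ (riemannZeta_ne_zero_of_one_lt_re hs)
  have h2 : HasProd (fun b : Nat.Primes => if (b : ℕ) = 2 then (1 - (2 : ℂ) ^ (-s))⁻¹ else 1)
      ((1 - (2 : ℂ) ^ (-s))⁻¹) := by
    have h := hasProd_single (f := fun b : Nat.Primes =>
      if (b : ℕ) = 2 then (1 - (2 : ℂ) ^ (-s))⁻¹ else 1) (⟨2, Nat.prime_two⟩ : Nat.Primes)
      (fun b hb => if_neg (fun hb2 => hb (Subtype.ext hb2)))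
    rwa [if_pos (by rfl)] at h
  have h3 := h1.mul h2
  have h4 : (zeta2 s)⁻¹ = (riemannZeta s)⁻¹ * (1 - (2 : ℂ) ^ (-s))⁻¹ := by rw [zeta2, mul_inv]
  rw [h4]
  suffices hfun : (fun p : Nat.Primes => if (p : ℕ) = 2 then (1 : ℂ) else 1 - (p : ℂ) ^ (-s)) =
      (fun b : Nat.Primes => (1 - (b : ℂ) ^ (-s))⁻¹⁻¹ *
        if (b : ℕ) = 2 then (1 - (2 : ℂ) ^ (-s))⁻¹ else 1) by
    rw [hfun]
    exact h3
  funext p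
  by_cases hp : (p : ℕ) = 2
  · have hp' : p = ⟨2, Nat.prime_two⟩ := Subtype.ext hp
    subst hp'
    have : (1 - (2 : ℂ) ^ (-s)) ≠ 0 := right_ne_zero_of_mul hne
    simp [this]
  · simp [hp]

theorem D_factorization (ℓ : ℕ) (hℓ : ℓ = 1 ∨ ℓ = 2) (u : Fin 4 → ℂ)
    (hu : ∀ i, 1 / 2 < (u i).re) :
    Summable (Dterm ℓ u) ∧
    (∑' n : Fin 4 → ℕ, Dterm ℓ u n) =
      (∏ i : Fin 4, ∏ j : Fin 4, if i ≤ j then zeta2 (u i + u j) else 1) *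
        HEuler (gl ℓ) u := by
  refine ⟨(aux_summable_D ℓ u hu).of_norm, ?_⟩
  have hre : ∀ i j, 1 < (u i + u j).re := fun i j => by
    have := hu i; have := hu j; rw [Complex.add_re]; linarith
  have hZ : HasProd (fun p : Nat.Primes => ∏ i : Fin 4, ∏ j : Fin 4,
      if i ≤ j then (if (p : ℕ) = 2 then 1 else 1 - (p : ℂ) ^ (-(u i + u j))) else 1)
      (∏ i : Fin 4, ∏ j : Fin 4, if i ≤ j then (zeta2 (u i + u j))⁻¹ else 1) := by
    refine hasProd_prod fun i _ => hasProd_prod fun j _ => ?_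
    split_ifs
    · exact aux_zeta2 (hre i j)
    · exact hasProd_one
  have hH := (aux_euler ℓ u hu).mul hZ
  have hinj : Function.Injective
      (fun p : {p : ℕ // p.Prime ∧ p ≠ 2} => show Nat.Primes from ⟨p.1, p.2.1⟩) := by
    intro a b h
    exact Subtype.ext (congrArg (fun q : Nat.Primes => (q : ℕ)) h)
  rw [← hinj.hasProd_iff] at hH
  · have hE : HEuler (gl ℓ) u = (∑' n, Dterm ℓ u n) *
      ∏ i : Fin 4, ∏ j : Fin 4, (if i ≤ j then (zeta2 (u i + u j))⁻¹ else 1) := by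
      rw [← hH.tprod_eq]
      refine tprod_congr fun p => ?_
      simp only [Function.comp, if_neg p.2.2]
      exact (aux_local ℓ u hu p.2.1 p.2.2).symm
    rw [hE, mul_left_comm, ← Finset.prod_mul_distrib]
    symm
    convert mul_one _
    refine Finset.prod_eq_one fun i _ => ?_
    rw [← Finset.prod_mul_distrib]
    refine Finset.prod_eq_one fun j _ => ?_
    split_ifs
    · exact mul_inv_cancel₀ (aux_zeta2_ne (hre i j))
    · simp
  · intro p hp
    have hp2 : (p : ℕ) = 2 := by
      by_contra h
      exact hp ⟨⟨p.1, p.2, h⟩, rfl⟩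
    simp [hp2, aux_local_two]
end
end

section
/- Let p be an odd prime and let z₁, z₂, z₃, z₄ ∈ ℂ with −1/2 < Re(z₁) < 1/2 and Re(zᵢ) > −1/2 for i = 2,3,4. Set w := (−z₁, z₂, z₃, z₄) and v := (1/2+w₁, 1/2+w₂, 1/2+w₃, 1/2+w₄) = (1/2−z₁, 1/2+z₂, 1/2+z₃, 1/2+z₄). Then (1 − 1/p) · (1 − p^{−(1−2z₁)})^{−1} · ∏_{1 ≤ i ≤ j ≤ 4} (1 − p^{−(vᵢ+vⱼ)}) · [ 1/p + (1 − 1/p) B_p(1/2+z₁, 1/2+z₂, 1/2+z₃, 1/2+z₄; 0) + (1 − p^{−2z₁}) p^{−(1/2−z₁)} B_p(1/2+z₁, 1/2+z₂, 1/2+z₃, 1/2+z₄; 1) − p^{−(2−2z₁)} ] = (1 − p^{−2}) · [ (1 − g₂(p)) ∏_{1 ≤ i ≤ j ≤ 4} (1 − p^{−(vᵢ+vⱼ)}) + g₂(p) C_p(v) ]. (This is the Euler-factor form, at the odd prime p, of the identity Z₄(1/2, 1/2+z₂−z₁, 1/2+z₃−z₁, 1/2+z₄−z₁, z₁) = (8/π²)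 H₂(1/2−z₁, 1/2+z₂, 1/2+z₃, 1/2+z₄); note ∏_{p odd}(1 − p^{−2}) = 8/π².) -/
open scoped Classical

noncomputable section

/-- `Bp p u a` is the sum of `p^{-(n₁u₁+n₂u₂+n₃u₃+n₄u₄)}` over quadruples of nonnegative
integers with `n₁+n₂+n₃+n₄ ≡ a (mod 2)`. -/
def Bp (p : ℕ) (u : Fin 4 → ℂ) (a : ℕ) : ℂ :=
  ∑' n : Fin 4 → ℕ,
    if (∑ i, n i) % 2 = a % 2 then (p : ℂ) ^ (-(∑ i, (n i : ℂ) * u i)) else 0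

/-- `g₂(p) = 1 - 1/(p+1)`. -/
def g2fun (p : ℕ) : ℂ := 1 - 1 / ((p : ℂ) + 1)

theorem geom_pi (k : ℕ) (x : Fin k → ℂ) (hx : ∀ i, ‖x i‖ < 1) :
    Summable (fun n : Fin k → ℕ => ‖∏ i, x i ^ n i‖) ∧
    ∑' n : Fin k → ℕ, ∏ i, x i ^ n i = ∏ i, (1 - x i)⁻¹ := by
  induction k with
  | zero =>
    constructor
    · exact Summable.of_finite
    · simp
  | succ k ih =>
    obtain ⟨h1, h2⟩ := ih (fun i => x i.succ) (fun i => hx _)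
    have h0 : Summable (fun m : ℕ => ‖x 0 ^ m‖) := by
      simpa [norm_pow] using summable_geometric_of_lt_one (norm_nonneg _) (hx 0)
    have e := Fin.consEquiv (fun _ : Fin (k+1) => ℕ)
    constructor
    · rw [← (Fin.consEquiv (fun _ : Fin (k+1) => ℕ)).summable_iff]
      refine (h0.mul_norm h1).congr ?_
      rintro ⟨a, b⟩
      simp [Fin.consEquiv, Fin.prod_univ_succ]
    · rw [← (Fin.consEquiv (fun _ : Fin (k+1) => ℕ)).tsum_eq, Fin.prod_univ_succ, ← h2,
        ← tsum_geometric_of_norm_lt_one (hx 0), tsum_mul_tsum_of_summable_norm h0 h1]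
      refine tsum_congr ?_
      rintro ⟨a, b⟩
      simp [Fin.consEquiv, Fin.prod_univ_succ]

theorem term_eq (p : ℕ) (hp : p ≠ 0) (u : Fin 4 → ℂ) (n : Fin 4 → ℕ) :
    (p : ℂ) ^ (-(∑ i, (n i : ℂ) * u i)) = ∏ i, ((p : ℂ) ^ (-(u i))) ^ n i := by
  have hp' : (p : ℂ) ≠ 0 := by exact_mod_cast hp
  simp only [← Complex.cpow_nat_mul, Fin.prod_univ_four, Fin.sum_univ_four,
    ← Complex.cpow_add _ _ hp']
  congr 1
  ring

theorem Bp_eq (p : ℕ) (hp : p ≠ 0) (u : Fin 4 → ℂ) (x : Fin 4 → ℂ)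
    (hxu : ∀ i, x i = (p : ℂ) ^ (-(u i))) (hx : ∀ i, ‖x i‖ < 1) (a : ℕ) :
    Bp p u a = (∏ i, (1 - x i)⁻¹ + (-1) ^ a * ∏ i, (1 + x i)⁻¹) / 2 := by
  obtain ⟨h1, h2⟩ := geom_pi 4 x hx
  obtain ⟨h3, h4⟩ := geom_pi 4 (fun i => - x i) (by simpa using hx)
  simp only [sub_neg_eq_add] at h4
  rw [← h2, ← h4, ← tsum_mul_left, ← h1.of_norm.tsum_add (h3.of_norm.mul_left _), ← tsum_div_const]
  unfold Bp
  refine tsum_congr fun n => ?_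
  rw [term_eq p hp]
  simp only [← hxu]
  have : ∏ i, (-x i) ^ n i = (-1) ^ (∑ i, n i) * ∏ i, x i ^ n i := by
    rw [← Finset.prod_pow_eq_pow_sum, ← Finset.prod_mul_distrib]
    exact Finset.prod_congr rfl fun i _ => by rw [← mul_pow]; simp
  rw [this, ← mul_assoc, ← pow_add]
  split_ifs with h
  · rw [Even.neg_one_pow (by rw [Nat.even_iff]; omega)]; ring
  · rw [Odd.neg_one_pow (by rw [Nat.odd_iff]; omega)]; ring

theorem even_sum (y : Fin 4 → ℂ) :
    (∑ A : Finset (Fin 4), if Even A.card then ∏ i ∈ A, y i else 0) =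
      (∏ i, (1 + y i) + ∏ i, (1 - y i)) / 2 := by
  have h1 := Finset.prod_one_add (f := y) (s := Finset.univ)
  have h2 := Finset.prod_one_add (f := fun i => - y i) (s := Finset.univ)
  simp only [← sub_eq_add_neg] at h2
  rw [h1, h2, ← Finset.sum_add_distrib, Finset.sum_div, Finset.powerset_univ]
  refine Finset.sum_congr rfl fun A _ => ?_
  rw [Finset.prod_neg]
  split_ifs with h
  · rw [h.neg_one_pow]; ring
  · rw [(Nat.not_even_iff_odd.mp h).neg_one_pow]; ring

theorem alg (P q x y a b c : ℂ) (hP : P ≠ 0) (hP1 : P + 1 ≠ 0) (hq : q = 1 / P) (hxy : x * y = q)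
    (hy0 : y ≠ 0) (hy : 1 - y ^ 2 ≠ 0)
    (hx1 : 1 - x ≠ 0) (hx2 : 1 + x ≠ 0)
    (ha1 : 1 - a ≠ 0) (ha2 : 1 + a ≠ 0)
    (hb1 : 1 - b ≠ 0) (hb2 : 1 + b ≠ 0)
    (hc1 : 1 - c ≠ 0) (hc2 : 1 + c ≠ 0) (R : ℂ) :
    (1 - q) * (1 - y ^ 2)⁻¹ *
      (R * ((1 - y ^ 2) * (1 - a ^ 2) * (1 - b ^ 2) * (1 - c ^ 2))) *
      (q + (1 - q) * (((1 - x)⁻¹ * (1 - a)⁻¹ * (1 - b)⁻¹ * (1 - c)⁻¹ +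
          (1 + x)⁻¹ * (1 + a)⁻¹ * (1 + b)⁻¹ * (1 + c)⁻¹) / 2) +
        (1 - x / y) * y * (((1 - x)⁻¹ * (1 - a)⁻¹ * (1 - b)⁻¹ * (1 - c)⁻¹ -
          (1 + x)⁻¹ * (1 + a)⁻¹ * (1 + b)⁻¹ * (1 + c)⁻¹) / 2) - q * y ^ 2) =
    (1 - q ^ 2) * ((1 - (1 - 1 / (P + 1))) *
      (R * ((1 - y ^ 2) * (1 - a ^ 2) * (1 - b ^ 2) * (1 - c ^ 2))) +
      (1 - 1 / (P + 1)) * (R * (((1 + y) * (1 + a) * (1 + b) * (1 + c) +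
        (1 - y) * (1 - a) * (1 - b) * (1 - c)) / 2))) := by
  have e1 : (1 - q) * (((1 - x)⁻¹ * (1 - a)⁻¹ * (1 - b)⁻¹ * (1 - c)⁻¹ +
          (1 + x)⁻¹ * (1 + a)⁻¹ * (1 + b)⁻¹ * (1 + c)⁻¹) / 2) +
        (1 - x / y) * y * (((1 - x)⁻¹ * (1 - a)⁻¹ * (1 - b)⁻¹ * (1 - c)⁻¹ -
          (1 + x)⁻¹ * (1 + a)⁻¹ * (1 + b)⁻¹ * (1 + c)⁻¹) / 2) =
      ((1 + y) * ((1 - a)⁻¹ * (1 - b)⁻¹ * (1 - c)⁻¹) +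
        (1 - y) * ((1 + a)⁻¹ * (1 + b)⁻¹ * (1 + c)⁻¹)) / 2 := by
    have t1 : (1 - q + (y - x)) * (1 - x)⁻¹ = 1 + y := by
      rw [← hxy]; field_simp; ring
    have t2 : (1 - q - (y - x)) * (1 + x)⁻¹ = 1 - y := by
      rw [← hxy]; field_simp; ring
    have t3 : (1 - x / y) * y = y - x := by field_simp
    rw [t3, ← t1, ← t2]; ring
  have e2 : (1 - a ^ 2) * (1 - b ^ 2) * (1 - c ^ 2) *
      (((1 + y) * ((1 - a)⁻¹ * (1 - b)⁻¹ * (1 - c)⁻¹) +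
        (1 - y) * ((1 + a)⁻¹ * (1 + b)⁻¹ * (1 + c)⁻¹)) / 2) =
      ((1 + y) * (1 + a) * (1 + b) * (1 + c) +
        (1 - y) * (1 - a) * (1 - b) * (1 - c)) / 2 := by
    field_simp; ring
  have e3 : (1 - q ^ 2) * (1 - (1 - 1 / (P + 1))) = (1 - q) * q := by
    rw [hq]; field_simp; ring
  have e4 : (1 - q ^ 2) * (1 - 1 / (P + 1)) = (1 - q) := by
    rw [hq]; field_simp; ring
  rw [mul_add, ← mul_assoc (1 - q ^ 2), ← mul_assoc (1 - q ^ 2), e3, e4, ← e2, add_assoc q, e1]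
  field_simp
  ring

theorem prod_le_eq (F : Fin 4 → Fin 4 → ℂ) :
    (∏ i : Fin 4, ∏ j : Fin 4, if i ≤ j then F i j else 1) =
      (F 0 1 * F 0 2 * F 0 3 * F 1 2 * F 1 3 * F 2 3) * (F 0 0 * F 1 1 * F 2 2 * F 3 3) := by
  simp (decide := true) only [Fin.prod_univ_four, if_true, if_false, mul_one, one_mul]
  ring

theorem prod_lt_eq (F : Fin 4 → Fin 4 → ℂ) :
    (∏ i : Fin 4, ∏ j : Fin 4, if i < j then F i j else 1) =
      F 0 1 * F 0 2 * F 0 3 * F 1 2 * F 1 3 * F 2 3 := by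
  simp (decide := true) only [Fin.prod_univ_four, if_true, if_false, mul_one, one_mul]
  ring

theorem one_ne (x : ℂ) (h : ‖x‖ < 1) : 1 - x ≠ 0 ∧ 1 + x ≠ 0 := by
  constructor
  · intro e
    rw [← sub_eq_zero.mp e] at h; simp at h
  · intro e
    rw [eq_neg_of_add_eq_zero_right e] at h; simp at h

theorem euler_factor_identity (p : ℕ) (hp : p.Prime) (hp2 : p ≠ 2) (z : Fin 4 → ℂ)
    (hz0l : -(1 / 2) < (z 0).re) (hz0r : (z 0).re < 1 / 2)
    (hz : ∀ i, i ≠ 0 → -(1 / 2) < (z i).re) :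
    (1 - 1 / (p : ℂ)) * (1 - (p : ℂ) ^ (-(1 - 2 * z 0)))⁻¹ *
        (∏ i : Fin 4, ∏ j : Fin 4,
          if i ≤ j then
            1 - (p : ℂ) ^ (-((Function.update (fun i => 1 / 2 + z i) 0 (1 / 2 - z 0)) i +
              (Function.update (fun i => 1 / 2 + z i) 0 (1 / 2 - z 0)) j))
          else 1) *
        (1 / (p : ℂ) + (1 - 1 / (p : ℂ)) * Bp p (fun i => 1 / 2 + z i) 0 +
          (1 - (p : ℂ) ^ (-(2 * z 0))) * (p : ℂ) ^ (-(1 / 2 - z 0)) *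
            Bp p (fun i => 1 / 2 + z i) 1 -
          (p : ℂ) ^ (-(2 - 2 * z 0))) =
      (1 - (p : ℂ) ^ (-(2 : ℂ))) *
        ((1 - g2fun p) *
            (∏ i : Fin 4, ∏ j : Fin 4,
              if i ≤ j then
                1 - (p : ℂ) ^ (-((Function.update (fun i => 1 / 2 + z i) 0 (1 / 2 - z 0)) i +
                  (Function.update (fun i => 1 / 2 + z i) 0 (1 / 2 - z 0)) j))
              else 1) +
          g2fun p * Cp p (Function.update (fun i => 1 / 2 + z i) 0 (1 / 2 - z 0))) := by
  have hP : (p : ℂ) ≠ 0 := by exact_mod_cast hp.ne_zero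
  have hP1 : (p : ℂ) + 1 ≠ 0 := by exact_mod_cast Nat.succ_ne_zero p
  have hlt : ∀ s : ℂ, -(1 / 2) < s.re → ‖(p : ℂ) ^ (-(1 / 2 + s))‖ < 1 := by
    intro s hs
    rw [Complex.norm_natCast_cpow_of_pos hp.pos]
    apply Real.rpow_lt_one_of_one_lt_of_neg
    · exact_mod_cast hp.one_lt
    · simp; norm_num at hs ⊢; linarith
  have hx : ∀ i, ‖(p : ℂ) ^ (-(1 / 2 + z i))‖ < 1 := by
    intro i
    apply hlt
    by_cases h : i = 0
    · rw [h]; exact hz0l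
    · exact hz i h
  have hy : ‖(p : ℂ) ^ (-(1 / 2 - z 0))‖ < 1 := by
    have := hlt (-z 0) (by simp; norm_num at hz0r ⊢; linarith)
    rwa [← sub_eq_add_neg] at this
  rw [Bp_eq p hp.ne_zero (fun i => 1 / 2 + z i) (fun i => (p : ℂ) ^ (-(1 / 2 + z i)))
      (fun i => rfl) hx 0,
    Bp_eq p hp.ne_zero (fun i => 1 / 2 + z i) (fun i => (p : ℂ) ^ (-(1 / 2 + z i)))
      (fun i => rfl) hx 1]
  unfold Cp g2fun
  rw [even_sum]
  set v := Function.update (fun i => 1 / 2 + z i) 0 (1 / 2 - z 0) with hv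
  have hadd : ∀ s t : ℂ, (p : ℂ) ^ (-(s + t)) = (p : ℂ) ^ (-s) * (p : ℂ) ^ (-t) := by
    intro s t
    rw [← Complex.cpow_add _ _ hP]; congr 1; ring
  have v0 : (p : ℂ) ^ (-(v 0)) = (p : ℂ) ^ (-(1 / 2 - z 0)) := by simp [hv]
  have v1 : (p : ℂ) ^ (-(v 1)) = (p : ℂ) ^ (-(1 / 2 + z 1)) := by simp [hv]
  have v2 : (p : ℂ) ^ (-(v 2)) = (p : ℂ) ^ (-(1 / 2 + z 2)) := by simp [hv]
  have v3 : (p : ℂ) ^ (-(v 3)) = (p : ℂ) ^ (-(1 / 2 + z 3)) := by simp [hv]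
  have hxy : (p : ℂ) ^ (-(1 / 2 + z 0)) * (p : ℂ) ^ (-(1 / 2 - z 0)) = 1 / (p : ℂ) := by
    rw [← hadd, one_div (p : ℂ), ← Complex.cpow_neg_one (p : ℂ)]; congr 1; ring
  have hy2 : (p : ℂ) ^ (-(1 - 2 * z 0)) = ((p : ℂ) ^ (-(1 / 2 - z 0))) ^ 2 := by
    rw [pow_two, ← hadd]; congr 1; ring
  have hy0 : (p : ℂ) ^ (-(1 / 2 - z 0)) ≠ 0 := by simp [Complex.cpow_eq_zero_iff, hP]
  have hxdy : (p : ℂ) ^ (-(2 * z 0)) =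
      (p : ℂ) ^ (-(1 / 2 + z 0)) / (p : ℂ) ^ (-(1 / 2 - z 0)) := by
    rw [eq_div_iff hy0, ← hadd]; congr 1; ring
  have hq2 : (p : ℂ) ^ (-(2 - 2 * z 0)) = 1 / (p : ℂ) * ((p : ℂ) ^ (-(1 / 2 - z 0))) ^ 2 := by
    rw [← hy2, one_div (p : ℂ), ← Complex.cpow_neg_one (p : ℂ), ← Complex.cpow_add _ _ hP]; congr 1; ring
  have hp2' : (p : ℂ) ^ (-(2 : ℂ)) = (1 / (p : ℂ)) ^ 2 := by
    rw [Complex.cpow_neg]; norm_num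
  rw [hy2, hxdy, hq2, hp2', prod_le_eq (fun i j => 1 - (p : ℂ) ^ (-(v i + v j))),
    prod_lt_eq (fun i j => 1 - (p : ℂ) ^ (-(v i + v j)))]
  simp only [hadd (v _)]
  simp only [Fin.prod_univ_four, v0, v1, v2, v3]
  have hx0 := one_ne _ (hx 0)
  have hx1 := one_ne _ (hx 1)
  have hx2 := one_ne _ (hx 2)
  have hx3 := one_ne _ (hx 3)
  have hyy := one_ne _ hy
  have hy3 : 1 - ((p : ℂ) ^ (-(1 / 2 - z 0))) ^ 2 ≠ 0 := by
    have := mul_ne_zero hyy.1 hyy.2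
    intro h; apply this; rw [← h]; ring
  generalize (p : ℂ) ^ (-(1 / 2 - z 0)) = y at *
  generalize (p : ℂ) ^ (-(1 / 2 + z 0)) = x at *
  generalize (p : ℂ) ^ (-(1 / 2 + z 1)) = a at *
  generalize (p : ℂ) ^ (-(1 / 2 + z 2)) = b at *
  generalize (p : ℂ) ^ (-(1 / 2 + z 3)) = c at *
  have key := alg p (1 / p) x y a b c hP hP1 rfl hxy hy0 hy3 hx0.1 hx0.2 hx1.1 hx1.2 hx2.1 hx2.2
    hx3.1 hx3.2 ((1 - y * a) * (1 - y * b) * (1 - y * c) * (1 - a * b) * (1 - a * c) * (1 - b * c))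
  simp only [← pow_two, pow_zero, pow_one, one_mul, neg_mul, ← sub_eq_add_neg]
  exact key
end
end
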